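/- In the credit-inheritance semantics, save preserves erasure and potential up to its cost: if Γ : save m a ⇓ᶜᴵ_m Δ : v, then ⌊Γ⌋ᶜᴵ = ⌊Δ⌋ᶜᴵ, ⌊Γ⌋ᶜᴵ : save m a ⇓ᴿ_0 ⌊Δ⌋ᶜᴵ : a, and Φᶜᴵ(Δ) − Φᶜᴵ(Γ) ≤ m. -/

import Mathlib

/-! ## Syntax of the fine-grain call-by-value lambda calculus with thunks -/

mutual
inductive Val : Type where
  | var : String → Val
  | ptr : Nat → Val
  | unit : Val
  | inl : Val → Val
  | inr : Val → Val
  | pair : Val → Val → Val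
  | lam : String → Expr → Val

inductive HeapVal : Type where
  | fold : Val → HeapVal
  | memo : Val → HeapVal
  | lazy : String → Val → HeapVal

inductive Expr : Type where
  | ret : Val → Expr
  | alloc : HeapVal → Expr
  | letE : String → Expr → Expr → Expr
  | caseE : Val → String → Expr → String → Expr → Expr
  | splitE : Val → String → String → Expr → Expr
  | app : Val → Val → Expr
  | unfoldE : Val → Expr
  | call : String → Val → Expr
  | force : Val → Expr
  | save : Nat → Val → Expr
  | spend : Nat → Val → Expr → Expr
  | pass : Val → Expr
end

/-! ## Capture-avoiding substitution (values substituted are closed) -/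

mutual
def substV (v : Val) (x : String) : Val → Val
  | .var y => if y = x then v else .var y
  | .ptr a => .ptr a
  | .unit => .unit
  | .inl w => .inl (substV v x w)
  | .inr w => .inr (substV v x w)
  | .pair w₁ w₂ => .pair (substV v x w₁) (substV v x w₂)
  | .lam y e => if y = x then .lam y e else .lam y (substE v x e)

def substH (v : Val) (x : String) : HeapVal → HeapVal
  | .fold w => .fold (substV v x w)
  | .memo w => .memo (substV v x w)
  | .lazy F w => .lazy F (substV v x w)

def substE (v : Val) (x : String) : Expr → Expr
  | .ret w => .ret (substV v x w)
  | .alloc hv => .alloc (substH v x hv)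
  | .letE y e₁ e₂ => .letE y (substE v x e₁) (if y = x then e₂ else substE v x e₂)
  | .caseE w y₁ e₁ y₂ e₂ =>
      .caseE (substV v x w) y₁ (if y₁ = x then e₁ else substE v x e₁)
        y₂ (if y₂ = x then e₂ else substE v x e₂)
  | .splitE w y₁ y₂ e =>
      .splitE (substV v x w) y₁ y₂ (if y₁ = x ∨ y₂ = x then e else substE v x e)
  | .app w₁ w₂ => .app (substV v x w₁) (substV v x w₂)
  | .unfoldE w => .unfoldE (substV v x w)
  | .call F w => .call F (substV v x w)
  | .force w => .force (substV v x w)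
  | .save n w => .save n (substV v x w)
  | .spend n w e => .spend n (substV v x w) (substE v x e)
  | .pass w => .pass (substV v x w)
end

/-! ## Heaps: finite partial maps from pointers to (annotated) heap values -/

structure Heap (A : Type) : Type where
  look : Nat → Option A
  fin : {a : Nat | look a ≠ none}.Finite

namespace Heap

def empty {A : Type} : Heap A := ⟨fun _ => none, by simp⟩

def upd {A : Type} (Γ : Heap A) (a : Nat) (v : A) : Heap A :=
  ⟨fun b => if b = a then some v else Γ.look b, by
    apply Set.Finite.subset (Γ.fin.insert a)
    intro b hb
    simp only [Set.mem_setOf_eq] at hb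
    by_cases h : b = a
    · simp [h]
    · simp only [h, if_false] at hb
      exact Set.mem_insert_iff.mpr (Or.inr hb)⟩

def erase {A : Type} (Γ : Heap A) (a : Nat) : Heap A :=
  ⟨fun b => if b = a then none else Γ.look b, by
    apply Set.Finite.subset Γ.fin
    intro b hb
    simp only [Set.mem_setOf_eq] at hb ⊢
    by_cases h : b = a
    · simp [h] at hb
    · simpa [h] using hb⟩

def eraseSet {A : Type} (Γ : Heap A) (D : Finset Nat) : Heap A :=
  ⟨fun b => if b ∈ D then none else Γ.look b, by
    apply Set.Finite.subset Γ.fin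
    intro b hb
    simp only [Set.mem_setOf_eq] at hb ⊢
    by_cases h : b ∈ D
    · simp [h] at hb
    · simpa [h] using hb⟩

def map {A B : Type} (Γ : Heap A) (f : A → B) : Heap B :=
  ⟨fun b => (Γ.look b).map f, by
    apply Set.Finite.subset Γ.fin
    intro b hb
    simp only [Set.mem_setOf_eq] at hb ⊢
    intro h
    rw [h] at hb
    simp at hb⟩

noncomputable def dom {A : Type} (Γ : Heap A) : Finset Nat := Γ.fin.toFinset

/-- Sum a numeric annotation over all cells of the heap. -/
noncomputable def total {A : Type} (Γ : Heap A) (f : A → ℕ) : ℕ :=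
  ∑ a ∈ Γ.dom, (Γ.look a).elim 0 f

end Heap

/-! ## The real cost semantics ⇓ᴿ -/

/-- Environment of top-level (possibly recursive) function definitions. -/
abbrev FEnv := String → Option (String × Expr)

abbrev RHeap := Heap HeapVal

/-- Big-step real semantics `Γ : e ⇓ᴿ_k Δ : v`.  Lambda applications and
function calls cost one step; `save`, `spend` and `pass` are no-ops. -/
inductive RBig (𝓕 : FEnv) : RHeap → Expr → Nat → RHeap → Val → Prop where
  | ret : ∀ Γ v, RBig 𝓕 Γ (.ret v) 0 Γ v
  | alloc : ∀ Γ a hv, Γ.look a = none →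
      RBig 𝓕 Γ (.alloc hv) 0 (Γ.upd a hv) (.ptr a)
  | letE : ∀ Γ Δ Θ x e₁ e₂ k l v w,
      RBig 𝓕 Γ e₁ k Δ v → RBig 𝓕 Δ (substE v x e₂) l Θ w →
      RBig 𝓕 Γ (.letE x e₁ e₂) (k + l) Θ w
  | caseL : ∀ Γ Δ v x₁ e₁ x₂ e₂ k w,
      RBig 𝓕 Γ (substE v x₁ e₁) k Δ w →
      RBig 𝓕 Γ (.caseE (.inl v) x₁ e₁ x₂ e₂) k Δ w
  | caseR : ∀ Γ Δ v x₁ e₁ x₂ e₂ k w,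
      RBig 𝓕 Γ (substE v x₂ e₂) k Δ w →
      RBig 𝓕 Γ (.caseE (.inr v) x₁ e₁ x₂ e₂) k Δ w
  | splitE : ∀ Γ Δ v₁ v₂ x y e k w,
      RBig 𝓕 Γ (substE v₂ y (substE v₁ x e)) k Δ w →
      RBig 𝓕 Γ (.splitE (.pair v₁ v₂) x y e) k Δ w
  | app : ∀ Γ Δ x e v k w,
      RBig 𝓕 Γ (substE v x e) k Δ w →
      RBig 𝓕 Γ (.app (.lam x e) v) (k + 1) Δ w
  | unfoldE : ∀ Γ a v, Γ.look a = some (.fold v) →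
      RBig 𝓕 Γ (.unfoldE (.ptr a)) 0 Γ v
  | call : ∀ Γ Δ F x e v k w, 𝓕 F = some (x, e) →
      RBig 𝓕 Γ (substE v x e) k Δ w →
      RBig 𝓕 Γ (.call F v) (k + 1) Δ w
  | force : ∀ Γ Δ a F v k w, Γ.look a = some (.lazy F v) →
      RBig 𝓕 (Γ.erase a) (.call F v) k Δ w →
      RBig 𝓕 Γ (.force (.ptr a)) k (Δ.upd a (.memo w)) w
  | recall : ∀ Γ a v, Γ.look a = some (.memo v) →
      RBig 𝓕 Γ (.force (.ptr a)) 0 Γ v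
  | save : ∀ Γ m v, RBig 𝓕 Γ (.save m v) 0 Γ v
  | spend : ∀ Γ Δ m v e k w, RBig 𝓕 Γ e k Δ w →
      RBig 𝓕 Γ (.spend m v e) k Δ w
  | pass : ∀ Γ v, RBig 𝓕 Γ (.pass v) 0 Γ v

/-! ## Credit inheritance ⇓ᶜᴵ : memoised thunks carry an optional heir -/

/-- Heap values of the credit-inheritance model: credits on lazy thunks,
an (optional) heir pointer on memoised thunks. -/
inductive CIHV : Type where
  | fold : Val → CIHV
  | memo : Option ℕ → Val → CIHV
  | lazy : ℕ → String → Val → CIHV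

abbrev CIHeap := Heap CIHV

/-- Allocation in the credit-inheritance model. -/
def toCIHV : HeapVal → CIHV
  | .fold v => .fold v
  | .memo v => .memo none v
  | .lazy F v => .lazy 0 F v

/-- An heir set of at most one pointer, represented as an `Option`. -/
abbrev Heir := Option ℕ

/-- Union of two heir sets (used in the let rule). -/
def heirUnion (H₁ H₂ : Heir) : Heir := H₁.elim H₂ some

/-- The side condition `|h₁ ∪ h₂| ≤ 1` of the let rule. -/
def heirCompat (H₁ H₂ : Heir) : Prop := H₁ = none ∨ H₂ = none ∨ H₁ = H₂

/-- Big-step credit-inheritance semantics `Γ : e ⇓^H_k Δ : v`, where `H` is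
the heir set (of at most one pointer) chosen by the computation. -/
inductive CIBig (𝓕 : FEnv) : CIHeap → Expr → Heir → Nat → CIHeap → Val → Prop where
  | ret : ∀ Γ v, CIBig 𝓕 Γ (.ret v) none 0 Γ v
  | alloc : ∀ Γ a hv, Γ.look a = none →
      CIBig 𝓕 Γ (.alloc hv) none 0 (Γ.upd a (toCIHV hv)) (.ptr a)
  | letE : ∀ Γ Δ Θ x e₁ e₂ H₁ H₂ k l v w,
      CIBig 𝓕 Γ e₁ H₁ k Δ v → CIBig 𝓕 Δ (substE v x e₂) H₂ l Θ w →
      heirCompat H₁ H₂ →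
      CIBig 𝓕 Γ (.letE x e₁ e₂) (heirUnion H₁ H₂) (k + l) Θ w
  | caseL : ∀ Γ Δ v x₁ e₁ x₂ e₂ H k w,
      CIBig 𝓕 Γ (substE v x₁ e₁) H k Δ w →
      CIBig 𝓕 Γ (.caseE (.inl v) x₁ e₁ x₂ e₂) H k Δ w
  | caseR : ∀ Γ Δ v x₁ e₁ x₂ e₂ H k w,
      CIBig 𝓕 Γ (substE v x₂ e₂) H k Δ w →
      CIBig 𝓕 Γ (.caseE (.inr v) x₁ e₁ x₂ e₂) H k Δ w
  | splitE : ∀ Γ Δ v₁ v₂ x y e H k w,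
      CIBig 𝓕 Γ (substE v₂ y (substE v₁ x e)) H k Δ w →
      CIBig 𝓕 Γ (.splitE (.pair v₁ v₂) x y e) H k Δ w
  | app : ∀ Γ Δ x e v H k w,
      CIBig 𝓕 Γ (substE v x e) H k Δ w →
      CIBig 𝓕 Γ (.app (.lam x e) v) H (k + 1) Δ w
  | unfoldE : ∀ Γ a v, Γ.look a = some (.fold v) →
      CIBig 𝓕 Γ (.unfoldE (.ptr a)) none 0 Γ v
  | call : ∀ Γ Δ F x e v H k w, 𝓕 F = some (x, e) →
      CIBig 𝓕 Γ (substE v x e) H k Δ w →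
      CIBig 𝓕 Γ (.call F v) H (k + 1) Δ w
  | save : ∀ Γ a n F v m, Γ.look a = some (.lazy n F v) →
      CIBig 𝓕 Γ (.save m (.ptr a)) none m (Γ.upd a (.lazy (n + m) F v)) (.ptr a)
  | waste : ∀ Γ a v m, Γ.look a = some (.memo none v) →
      CIBig 𝓕 Γ (.save m (.ptr a)) none m Γ (.ptr a)
  | inherit : ∀ Γ Δ a h w m v, Γ.look a = some (.memo (some h) w) →
      CIBig 𝓕 Γ (.save m (.ptr h)) none m Δ v →
      CIBig 𝓕 Γ (.save m (.ptr a)) none m Δ (.ptr a)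
  | pass : ∀ Γ Δ h m v,
      CIBig 𝓕 Γ (.save m (.ptr h)) none m Δ v →
      CIBig 𝓕 Γ (.pass (.ptr h)) (some h) m Δ v
  | force : ∀ Γ Δ a n F v H k w, Γ.look a = some (.lazy n F v) →
      CIBig 𝓕 (Γ.erase a) (.call F v) H k Δ w → k = n →
      CIBig 𝓕 Γ (.force (.ptr a)) none 0 (Δ.upd a (.memo H w)) w
  | recall : ∀ Γ a H v, Γ.look a = some (.memo H v) →
      CIBig 𝓕 Γ (.force (.ptr a)) none 0 Γ v

/-- The potential Φᶜᴵ: the total number of credits on lazy thunks. -/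
noncomputable def ΦCI (Γ : CIHeap) : ℕ :=
  Γ.total (fun hv => match hv with | .lazy n _ _ => n | _ => 0)

/-- The erasure ⌊·⌋ᶜᴵ: drop credit and heir annotations. -/
def stripCI (Γ : CIHeap) : RHeap :=
  Γ.map (fun hv => match hv with
    | .fold v => .fold v
    | .memo _ v => .memo v
    | .lazy _ F v => .lazy F v)

/-! A saving computation follows a chain of heirs and alters at most the thunk at its end, by
depositing `m` credits there if that thunk is still lazy. Credits are invisible to the erasure
and a deposit changes one summand of the potential, by `m`. -/

attribute [ext] Heap

namespace Heap

variable {A B : Type} (Γ : Heap A) (a : ℕ)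

theorem look_upd_self (v : A) : (Γ.upd a v).look a = some v := if_pos rfl

theorem upd_eq_self {v : A} (h : Γ.look a = some v) : Γ.upd a v = Γ := by
  ext1
  funext b
  by_cases hb : b = a
  · rw [hb, look_upd_self, h]
  · exact if_neg hb

theorem map_upd (f : A → B) (v : A) : (Γ.upd a v).map f = (Γ.map f).upd a (f v) := by
  ext1
  funext b
  exact apply_ite (Option.map f) (b = a) (some v) (Γ.look b)

theorem erase_upd (v : A) : (Γ.upd a v).erase a = Γ.erase a := by
  ext1
  funext b
  exact ite_congr rfl (fun _ => rfl) (fun hb => if_neg hb)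

theorem mem_dom {b : ℕ} : b ∈ Γ.dom ↔ Γ.look b ≠ none := Γ.fin.mem_toFinset

theorem dom_erase : (Γ.erase a).dom = Γ.dom.erase a := by
  ext b
  by_cases hb : b = a <;> simp [mem_dom, erase, hb]

theorem total_erase_add (f : A → ℕ) :
    (Γ.erase a).total f + (Γ.look a).elim 0 f = Γ.total f := by
  have look_erase : ∀ b ∈ Γ.dom.erase a, (Γ.erase a).look b = Γ.look b :=
    fun b hb => if_neg (Finset.ne_of_mem_erase hb)
  have sum_erase : (Γ.erase a).total f = ∑ b ∈ Γ.dom.erase a, (Γ.look b).elim 0 f := by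
    rw [total, dom_erase]
    exact Finset.sum_congr rfl fun b hb => by rw [look_erase b hb]
  rw [sum_erase, total]
  by_cases ha : a ∈ Γ.dom
  · exact Finset.sum_erase_add _ _ ha
  · have look_a : Γ.look a = none := not_not.mp fun h => ha (Γ.mem_dom.mpr h)
    rw [Finset.erase_eq_of_notMem ha, look_a, Option.elim_none, add_zero]

theorem total_upd_add (f : A → ℕ) (v : A) :
    (Γ.upd a v).total f + (Γ.look a).elim 0 f = Γ.total f + f v := by
  rw [← total_erase_add (Γ.upd a v) a, ← total_erase_add Γ a, erase_upd, look_upd_self,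
    Option.elim_some, add_right_comm]

end Heap

section LazyUpdate

variable {Γ : CIHeap} {a n : ℕ} {F : String} {v : Val}

theorem stripCI_upd_lazy (h : Γ.look a = some (.lazy n F v)) (n' : ℕ) :
    stripCI (Γ.upd a (.lazy n' F v)) = stripCI Γ := by
  have look_strip : (stripCI Γ).look a = some (.lazy F v) := by
    simp only [stripCI, Heap.map, h, Option.map_some]
  rw [stripCI, Heap.map_upd]
  exact Heap.upd_eq_self _ a look_strip

theorem ΦCI_upd_lazy_add (h : Γ.look a = some (.lazy n F v)) (m : ℕ) :
    ΦCI (Γ.upd a (.lazy (n + m) F v)) = ΦCI Γ + m := by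
  have balance : ΦCI (Γ.upd a (.lazy (n + m) F v)) + n = ΦCI Γ + (n + m) := by
    simpa only [ΦCI, h, Option.elim_some] using Γ.total_upd_add a _ (.lazy (n + m) F v)
  omega

end LazyUpdate

theorem CIBig.save_eq_or_deposit {𝓕 : FEnv} {Γ Δ : CIHeap} {m k : ℕ} {u v : Val} {H : Heir}
    (h : CIBig 𝓕 Γ (.save m u) H k Δ v) :
    Δ = Γ ∨ ∃ b n F w, Γ.look b = some (.lazy n F w) ∧ Δ = Γ.upd b (.lazy (n + m) F w) := by
  generalize he : Expr.save m u = e at h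
  induction h generalizing u with
  | save Γ b n F w _ look_b =>
    cases he
    exact .inr ⟨b, n, F, w, look_b, rfl⟩
  | waste => exact .inl rfl
  | inherit _ _ _ _ _ _ _ _ _ ih =>
    cases he
    exact ih rfl
  | _ => cases he

/-- **Saving is sound in the credit-inheritance semantics** (Lemma
`credit-inheritance-save-sound`): if `Γ : save m a ⇓ᶜᴵ_m Δ : v`, then
`⌊Γ⌋ᶜᴵ = ⌊Δ⌋ᶜᴵ`, `⌊Γ⌋ᶜᴵ : save m a ⇓ᴿ_0 ⌊Δ⌋ᶜᴵ : a`, and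
`Φᶜᴵ(Δ) − Φᶜᴵ(Γ) ≤ m`. -/
theorem credit_inheritance_save_sound (𝓕 : FEnv) (Γ Δ : CIHeap)
    (m : ℕ) (a : ℕ) (v : Val)
    (h : CIBig 𝓕 Γ (.save m (.ptr a)) none m Δ v) :
    stripCI Γ = stripCI Δ ∧
    RBig 𝓕 (stripCI Γ) (.save m (.ptr a)) 0 (stripCI Δ) (.ptr a) ∧
    (ΦCI Δ : ℤ) - (ΦCI Γ : ℤ) ≤ (m : ℤ) := by
  obtain ⟨strip_eq, potential_le⟩ : stripCI Γ = stripCI Δ ∧ ΦCI Δ ≤ ΦCI Γ + m := by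
    rcases h.save_eq_or_deposit with rfl | ⟨b, n, F, w, look_b, rfl⟩
    · exact ⟨rfl, Nat.le_add_right _ _⟩
    · exact ⟨(stripCI_upd_lazy look_b (n + m)).symm, (ΦCI_upd_lazy_add look_b m).le⟩
  refine ⟨strip_eq, ?_, by omega⟩
  rw [strip_eq]
  exact .save _ m (.ptr a)
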